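/- arXiv:2102.02400 — 3 statements merged into one kernel-verified Lean document; each statement's English description precedes it below -/
import Mathlib

section
/- For every C ≥ 3, there exist m ≥ 1 and a C×m real matrix H such that every column of H lies in the probability simplex (nonnegative entries summing to 1), no column of H equals a standard basis vector of ℝ^C, and H is sufficiently scattered. -/
open Matrix BigOperators

/-- Euclidean norm of a vector in `ℝ^C`. -/
noncomputable def euclNorm {C : ℕ} (v : Fin C → ℝ) : ℝ :=
  Real.sqrt (∑ i, v i ^ 2)

/-- The conical hull of the columns of a matrix `M`. -/
def coneOf {C m : ℕ} (M : Matrix (Fin C) (Fin m) ℝ) : Set (Fin C → ℝ) :=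
  {v | ∃ α : Fin m → ℝ, (∀ j, 0 ≤ α j) ∧ v = M.mulVec α}

/-- The second-order cone `R = {v : ∑ i, v i ≥ √(C-1) ‖v‖₂}`. -/
noncomputable def Rcone (C : ℕ) : Set (Fin C → ℝ) :=
  {v | Real.sqrt ((C : ℝ) - 1) * euclNorm v ≤ ∑ i, v i}

/-- `Q` is a permutation matrix. -/
def IsPermMatrix {C : ℕ} (Q : Matrix (Fin C) (Fin C) ℝ) : Prop :=
  ∃ σ : Equiv.Perm (Fin C), ∀ i j, Q i j = if i = σ j then 1 else 0

/-- `H` is sufficiently scattered. -/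
noncomputable def SuffScattered {C m : ℕ} (H : Matrix (Fin C) (Fin m) ℝ) : Prop :=
  Rcone C ⊆ coneOf H ∧
    ∀ Q : Matrix (Fin C) (Fin C) ℝ, Qᵀ * Q = 1 → ¬ IsPermMatrix Q →
      ¬ (coneOf H ⊆ coneOf Q)

/-- `T` is column stochastic. -/
def ColStochastic {C : ℕ} (T : Matrix (Fin C) (Fin C) ℝ) : Prop :=
  (∀ i j, 0 ≤ T i j) ∧ ∀ j, ∑ i, T i j = 1

/-- `T` is diagonally dominant in the label-noise sense: `T_ii > T_ji` for `j ≠ i`. -/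
def DiagDominant {C : ℕ} (T : Matrix (Fin C) (Fin C) ℝ) : Prop :=
  ∀ i j, j ≠ i → T j i < T i i

/-- The dual cone of a set `S ⊆ ℝ^C`. -/
def dualCone {C : ℕ} (S : Set (Fin C → ℝ)) : Set (Fin C → ℝ) :=
  {y | ∀ x ∈ S, 0 ≤ ∑ i, y i * x i}

/-!
`Rcone C` meets each facet of the nonnegative orthant only along the ray through `1 - eₖ`, so a cone
containing it need not contain any `eᵢ`: cutting the simplex off near its vertices, at `vₖ ≤ 1 - t`,
still leaves room for `Rcone C`, where `∑ vᵢ = 1` forces `vₖ ≤ 2 / C`. The vertices of the cut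
simplex, `(1 - t) eᵢ + t eⱼ`, are the columns of `H`.

If `Q` is orthogonal and `Rcone C ⊆ cone(H) ⊆ cone(Q)`, every column `q` of `Q` is a unit vector
in the dual cone of `cone(H)`. The vector `1 - q` lies in `Rcone C`, and `⟨q, 1 - q⟩ = ∑ qᵢ - 1`, so
every column sum is at least `1`; the squares of the column sums add up to `‖Qᵀ1‖² = C`, so all of
them are `1`, and `q ⊥ 1 - q`. Along `Rcone C` the cuts are not active, so `1 - q + ε eᵢ` still lies
in `cone(H)`, and pairing it with `q` gives `qᵢ ≥ 0`. A nonnegative orthogonal matrix is a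
permutation matrix.
-/

section FiniteSums

variable {ι : Type*} [Fintype ι]

lemma sum_mul_one_sub {R : Type*} [CommRing R] {q : ι → R} (hq : ∑ i, q i ^ 2 = 1) :
    ∑ i, q i * (1 - q) i = ∑ i, q i - 1 := by
  simp [mul_sub, ← sq, hq]

lemma sum_erase_smul_eq_sum_smul_single_add_single [DecidableEq ι]
    {R : Type*} [CommRing R] (v : ι → R) (k : ι) :
    (∑ j ∈ Finset.univ.erase k, v j) • v = ∑ j ∈ Finset.univ.erase k,
      v j • (Pi.single j (∑ j ∈ Finset.univ.erase k, v j) + Pi.single k (v k)) := by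
  ext l
  rw [Finset.sum_apply]
  by_cases hl : l = k
  · subst hl
    rw [Pi.smul_apply, smul_eq_mul, Finset.sum_mul]
    refine Finset.sum_congr rfl fun j hj => ?_
    simp [(Finset.ne_of_mem_erase hj).symm]
  · refine .trans ?_ (Finset.sum_eq_single_of_mem l (Finset.mem_erase.2 ⟨hl, Finset.mem_univ l⟩)
      fun j _ hj => by simp [hl, hj.symm]).symm
    simp [hl, mul_comm]

lemma exists_add_single_le_mul_sum [DecidableEq ι] {v : ι → ℝ} {c d : ℝ}
    (hcd : c < d) (hd : 0 ≤ d) (hS : 0 < ∑ l, v l)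
    (hv : ∀ k, v k ≤ c * ∑ l, v l) (i : ι) :
    ∃ ε > 0, ∀ k, (v + Pi.single i ε : ι → ℝ) k ≤
      d * ∑ l, (v + Pi.single i ε : ι → ℝ) l := by
  set ε := (d - c) * ∑ l, v l with hε_def
  have hε : 0 < ε := mul_pos (sub_pos.2 hcd) hS
  refine ⟨ε, hε, fun k => ?_⟩
  calc v k + (Pi.single i ε : ι → ℝ) k ≤ c * ∑ l, v l + ε :=
        add_le_add (hv k) ((Pi.single_apply i ε k).trans_le (by split_ifs <;> linarith))
    _ = d * ∑ l, v l := by rw [hε_def]; ring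
    _ ≤ d * (∑ l, v l + ε) := mul_le_mul_of_nonneg_left (by linarith) hd
    _ = d * ∑ l, (v + Pi.single i ε : ι → ℝ) l := by simp [Finset.sum_add_distrib]

end FiniteSums

section Orthogonal

variable {m n R : Type*} [Fintype m] [DecidableEq n] [CommRing R]

lemma sum_sq_col_of_transpose_mul_self_eq_one {A : Matrix m n R} (hA : Aᵀ * A = 1) (k : n) :
    ∑ i, A i k ^ 2 = 1 := by
  simpa [Matrix.mul_apply, sq] using congrFun₂ hA k k

lemma mul_eq_zero_of_transpose_mul_self_eq_one_of_nonneg [PartialOrder R] [IsOrderedRing R]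
    {A : Matrix m n R} (hA : Aᵀ * A = 1) (h0 : ∀ i j, 0 ≤ A i j) {j k : n} (hjk : j ≠ k) (i : m) :
    A i j * A i k = 0 := by
  have hcols : ∑ i, A i j * A i k = 0 := by
    simpa [Matrix.mul_apply, hjk] using congrFun₂ hA j k
  exact (Finset.sum_eq_zero_iff_of_nonneg fun i _ => mul_nonneg (h0 i j) (h0 i k)).1 hcols i
    (Finset.mem_univ i)

lemma sum_colSum_sq_of_transpose_mul_self_eq_one [Fintype n] {A : Matrix n n R}
    (hA : Aᵀ * A = 1) : ∑ k, (∑ i, A i k) ^ 2 = Fintype.card n := by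
  calc ∑ k, (∑ i, A i k) ^ 2 = (1 ᵥ* A) ⬝ᵥ (1 ᵥ* A) := by
        simp [dotProduct, Matrix.vecMul, sq]
    _ = 1 ⬝ᵥ ((A * Aᵀ) *ᵥ 1) := by
        rw [← Matrix.dotProduct_mulVec, ← Matrix.mulVec_transpose, Matrix.mulVec_mulVec]
    _ = Fintype.card n := by simp [mul_eq_one_comm.1 hA]

lemma isPermMatrix_of_transpose_mul_self_eq_one_of_nonneg {C : ℕ} {Q : Matrix (Fin C) (Fin C) ℝ}
    (hQ : Qᵀ * Q = 1) (h0 : ∀ i j, 0 ≤ Q i j) : IsPermMatrix Q := by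
  have hQ' : Qᵀᵀ * Qᵀ = 1 := mul_eq_one_comm.1 hQ
  have hunit := sum_sq_col_of_transpose_mul_self_eq_one hQ
  have hsupp : ∀ k, ∃ i, Q i k ≠ 0 := by
    intro k
    by_contra! hk
    simpa [hk] using hunit k
  choose f hf using hsupp
  have hoff : ∀ i k, i ≠ f k → Q i k = 0 := fun i k hik =>
    (mul_eq_zero.1 (mul_eq_zero_of_transpose_mul_self_eq_one_of_nonneg hQ'
      (fun i j => h0 j i) hik k)).resolve_right (hf k)
  have hone : ∀ k, Q (f k) k = 1 := by
    intro k
    have hsq : Q (f k) k ^ 2 = 1 := by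
      rw [← hunit k, Finset.sum_eq_single (f k) (fun i _ hi => by simp [hoff i k hi]) (by simp)]
    exact (pow_eq_one_iff_of_nonneg (h0 (f k) k) two_ne_zero).1 hsq
  have hinj : Function.Injective f := by
    intro a b hab
    by_contra hne
    have := mul_eq_zero_of_transpose_mul_self_eq_one_of_nonneg hQ h0 hne (f a)
    exact mul_ne_zero (hf a) (hab ▸ hf b) this
  refine ⟨Equiv.ofBijective f hinj.bijective_of_finite, fun i j => ?_⟩
  rw [Equiv.ofBijective_apply]
  split_ifs with hi
  · rw [hi, hone]
  · exact hoff i j hi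

end Orthogonal

section SecondOrderCone

variable {C : ℕ} {v q : Fin C → ℝ}

lemma mem_Rcone_iff :
    v ∈ Rcone C ↔ 0 ≤ ∑ i, v i ∧ ((C : ℝ) - 1) * ∑ i, v i ^ 2 ≤ (∑ i, v i) ^ 2 := by
  rw [Rcone, Set.mem_ofPred_eq, euclNorm,
    ← Real.sqrt_mul' _ (Finset.sum_nonneg fun i _ => sq_nonneg (v i)), Real.sqrt_le_iff]

lemma card_mul_sq_le_of_mem_Rcone (hv : v ∈ Rcone C) (k : Fin C) :
    C * v k ^ 2 ≤ 2 * (∑ i, v i) * v k := by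
  have hcard : ((Finset.univ.erase k).card : ℝ) = C - 1 := by
    rw [Finset.cast_card_erase_of_mem (Finset.mem_univ k), Finset.card_univ, Fintype.card_fin]
  have hsum : ∑ i ∈ Finset.univ.erase k, v i = ∑ i, v i - v k :=
    Finset.sum_erase_eq_sub (Finset.mem_univ k)
  have hsq : ∑ i ∈ Finset.univ.erase k, v i ^ 2 = ∑ i, v i ^ 2 - v k ^ 2 :=
    Finset.sum_erase_eq_sub (Finset.mem_univ k)
  have hcs : (∑ i, v i - v k) ^ 2 ≤ (C - 1) * (∑ i, v i ^ 2 - v k ^ 2) := by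
    rw [← hsum, ← hsq, ← hcard]
    exact sq_sum_le_card_mul_sum_sq
  linarith [(mem_Rcone_iff.1 hv).2]

lemma nonneg_of_mem_Rcone (hv : v ∈ Rcone C) : 0 ≤ v := by
  intro k
  have hC : (0 : ℝ) < C := Nat.cast_pos.2 k.pos
  by_contra! hk
  nlinarith [card_mul_sq_le_of_mem_Rcone hv k, mul_pos hC (sq_pos_of_neg hk),
    mul_nonneg (mem_Rcone_iff.1 hv).1 (neg_nonneg.2 hk.le)]

lemma card_mul_le_two_mul_sum_of_mem_Rcone (hv : v ∈ Rcone C) (k : Fin C) :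
    C * v k ≤ 2 * ∑ i, v i := by
  rcases (nonneg_of_mem_Rcone hv k).eq_or_lt' with hk | hk
  · rw [hk, Pi.zero_apply, mul_zero]
    exact mul_nonneg zero_le_two (mem_Rcone_iff.1 hv).1
  · refine le_of_mul_le_mul_right ?_ hk
    linarith [card_mul_sq_le_of_mem_Rcone hv k]

lemma one_sub_mem_Rcone (hq : ∑ i, q i ^ 2 = 1) : 1 - q ∈ Rcone C := by
  have hle : ∀ i, q i ≤ 1 := fun i => by
    have : q i ^ 2 ≤ 1 :=
      hq ▸ Finset.single_le_sum (fun j _ => sq_nonneg (q j)) (Finset.mem_univ i)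
    exact (abs_le_one_iff_mul_self_le_one.2 (by rwa [← sq])).trans' (le_abs_self _)
  have hsum : ∑ i, (1 - q) i = C - ∑ i, q i := by simp
  have hsq : ∑ i, (1 - q) i ^ 2 = C - 2 * ∑ i, q i + 1 := by
    simp [sub_sq, Finset.sum_add_distrib, ← Finset.mul_sum, hq]
  refine mem_Rcone_iff.2 ⟨Finset.sum_nonneg fun i _ => sub_nonneg.2 (hle i), ?_⟩
  rw [hsum, hsq]
  linarith [sq_nonneg (∑ i, q i - 1)]

end SecondOrderCone

section Duality

variable {C m : ℕ}

lemma dualCone_anti {S T : Set (Fin C → ℝ)} (h : S ⊆ T) : dualCone T ⊆ dualCone S :=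
  fun _ hy x hx => hy x (h hx)

lemma col_mem_dualCone_coneOf {M : Matrix (Fin C) (Fin m) ℝ} (hM : Mᵀ * M = 1) (k : Fin m) :
    M.col k ∈ dualCone (coneOf M) := by
  rintro _ ⟨α, hα, rfl⟩
  calc 0 ≤ α k := hα k
    _ = (Mᵀ *ᵥ (M *ᵥ α)) k := by rw [Matrix.mulVec_mulVec, hM, Matrix.one_mulVec]

lemma one_le_sum_of_mem_dualCone_Rcone {q : Fin C → ℝ} (hq : ∑ i, q i ^ 2 = 1)
    (hR : q ∈ dualCone (Rcone C)) : 1 ≤ ∑ i, q i := by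
  have := hR _ (one_sub_mem_Rcone hq)
  rwa [sum_mul_one_sub hq, sub_nonneg] at this

lemma colSum_eq_one_of_Rcone_subset_coneOf {Q : Matrix (Fin C) (Fin C) ℝ} (hQ : Qᵀ * Q = 1)
    (hR : Rcone C ⊆ coneOf Q) (k : Fin C) : ∑ i, Q i k = 1 := by
  have hge : ∀ k, 1 ≤ ∑ i, Q i k := fun k =>
    one_le_sum_of_mem_dualCone_Rcone (sum_sq_col_of_transpose_mul_self_eq_one hQ k)
      (dualCone_anti hR (col_mem_dualCone_coneOf hQ k))
  have hdefect : ∑ k, ((∑ i, Q i k) ^ 2 - 1) = 0 := by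
    simp [sum_colSum_sq_of_transpose_mul_self_eq_one hQ]
  have hsq : (∑ i, Q i k) ^ 2 - 1 = 0 :=
    (Finset.sum_eq_zero_iff_of_nonneg fun k _ => sub_nonneg.2 (one_le_pow₀ (hge k))).1 hdefect k
      (Finset.mem_univ k)
  exact (pow_eq_one_iff_of_nonneg (by linarith [hge k]) two_ne_zero).1 (sub_eq_zero.1 hsq)

lemma nonneg_of_add_single_mem {S : Set (Fin C → ℝ)} {q v : Fin C → ℝ} (hq : q ∈ dualCone S)
    (hqv : ∑ l, q l * v l = 0) {i : Fin C} {ε : ℝ} (hε : 0 < ε) (hv : v + Pi.single i ε ∈ S) :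
    0 ≤ q i := by
  have hpair : ∑ l, q l * (v + Pi.single i ε : Fin C → ℝ) l = q i * ε := by
    simp [mul_add, Finset.sum_add_distrib, hqv, Pi.single_apply]
  exact nonneg_of_mul_nonneg_left (hpair ▸ hq _ hv) hε

lemma suffScattered_of_forall_exists_add_single_mem {H : Matrix (Fin C) (Fin m) ℝ}
    (hR : Rcone C ⊆ coneOf H)
    (hH : ∀ v ∈ Rcone C, v ≠ 0 → ∀ i, ∃ ε > 0, v + Pi.single i ε ∈ coneOf H) :
    SuffScattered H := by
  refine ⟨hR, fun Q hQ hperm hHQ => hperm ?_⟩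
  refine isPermMatrix_of_transpose_mul_self_eq_one_of_nonneg hQ fun i k => ?_
  have hunit := sum_sq_col_of_transpose_mul_self_eq_one hQ k
  have hortho : ∑ l, Q.col k l * (1 - Q.col k) l = 0 := by
    rw [sum_mul_one_sub (q := Q.col k) hunit, sub_eq_zero]
    exact colSum_eq_one_of_Rcone_subset_coneOf hQ (hR.trans hHQ) k
  by_cases h0 : 1 - Q.col k = 0
  · have : 1 - Q i k = 0 := congrFun h0 i
    linarith
  · obtain ⟨ε, hε, hmem⟩ := hH _ (one_sub_mem_Rcone hunit) h0 i
    exact nonneg_of_add_single_mem (col_mem_dualCone_coneOf hQ k) hortho hε (hHQ hmem)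

lemma coneOf_eq_hull (M : Matrix (Fin C) (Fin m) ℝ) :
    coneOf M = PointedCone.hull ℝ (Set.range M.col) := by
  ext v
  rw [SetLike.mem_coe, Submodule.mem_span_range_iff_exists_fun]
  constructor
  · rintro ⟨α, hα, rfl⟩
    refine ⟨fun j => ⟨α j, hα j⟩, ?_⟩
    simp only [Matrix.mulVec_eq_sum, op_smul_eq_smul]
    rfl
  · rintro ⟨c, rfl⟩
    refine ⟨fun j => c j, fun j => (c j).2, ?_⟩
    simp only [Matrix.mulVec_eq_sum, op_smul_eq_smul]
    rfl

end Duality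

section TruncatedSimplex

variable {C : ℕ} {t : ℝ}

/-- The vertices `(1 - t) eᵢ + t eⱼ`, `i ≠ j`, of the truncated probability simplex
`{v ∈ stdSimplex | ∀ k, vₖ ≤ 1 - t}` (for `0 ≤ t ≤ 1 / 2`); for small `t > 0` they serve
as the columns of a sufficiently scattered matrix without anchor points. -/
def truncVertices (C : ℕ) (t : ℝ) : Set (Fin C → ℝ) :=
  {w | ∃ i j, i ≠ j ∧ w = Pi.single i (1 - t) + Pi.single j t}

lemma truncVertices_finite (C : ℕ) (t : ℝ) : (truncVertices C t).Finite :=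
  (Set.finite_range fun p : Fin C × Fin C => Pi.single p.1 (1 - t) + Pi.single p.2 t).subset <| by
    rintro _ ⟨i, j, -, rfl⟩
    exact ⟨(i, j), rfl⟩

lemma truncVertices_nonempty (hC : 2 ≤ C) : (truncVertices C t).Nonempty :=
  ⟨_, ⟨0, by omega⟩, ⟨1, by omega⟩, by simp, rfl⟩

lemma truncVertices_subset_stdSimplex (ht0 : 0 ≤ t) (ht1 : t ≤ 1) :
    truncVertices C t ⊆ stdSimplex ℝ (Fin C) := by
  rintro _ ⟨i, j, -, rfl⟩
  have hnonneg : (0 : Fin C → ℝ) ≤ Pi.single i (1 - t) + Pi.single j t :=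
    add_nonneg (Pi.single_nonneg.2 (sub_nonneg.2 ht1)) (Pi.single_nonneg.2 ht0)
  exact ⟨hnonneg, by simp [Finset.sum_add_distrib]⟩

lemma single_one_notMem_truncVertices (ht0 : 0 < t) (ht1 : t < 1) (k : Fin C) :
    Pi.single k 1 ∉ truncVertices C t := by
  rintro ⟨i, j, hij, h⟩
  have hi : (Pi.single k 1 : Fin C → ℝ) i = 1 - t := by simpa [hij] using congrFun h i
  rw [Pi.single_apply] at hi
  split_ifs at hi <;> linarith

lemma single_add_single_mem_hull_truncVertices (ht : t < 1 / 2) {i j : Fin C} (hij : i ≠ j)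
    {x y : ℝ} (hx : t * (x + y) ≤ x) (hy : t * (x + y) ≤ y) :
    Pi.single i x + Pi.single j y ∈ PointedCone.hull ℝ (truncVertices C t) := by
  have hpos : 0 < 1 - 2 * t := by linarith
  obtain ⟨a, b, ha, hb, hax, hby⟩ :
      ∃ a b : ℝ, 0 ≤ a ∧ 0 ≤ b ∧ x = a * (1 - t) + b * t ∧ y = b * (1 - t) + a * t :=
    ⟨(x - t * (x + y)) / (1 - 2 * t), (y - t * (x + y)) / (1 - 2 * t),
      div_nonneg (sub_nonneg.2 hx) hpos.le, div_nonneg (sub_nonneg.2 hy) hpos.le,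
      by rw [div_mul_eq_mul_div, div_mul_eq_mul_div, ← add_div, eq_div_iff hpos.ne']; ring,
      by rw [div_mul_eq_mul_div, div_mul_eq_mul_div, ← add_div, eq_div_iff hpos.ne']; ring⟩
  have hdecomp : (Pi.single i x + Pi.single j y : Fin C → ℝ) =
      a • (Pi.single i (1 - t) + Pi.single j t) + b • (Pi.single j (1 - t) + Pi.single i t) := by
    simp only [hax, hby, Pi.single_add, smul_add, ← Pi.single_smul, smul_eq_mul]
    abel
  rw [hdecomp]
  exact add_mem
    (PointedCone.smul_mem _ ha (PointedCone.subset_hull ⟨i, j, hij, rfl⟩))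
    (PointedCone.smul_mem _ hb (PointedCone.subset_hull ⟨j, i, hij.symm, rfl⟩))

lemma mem_hull_truncVertices (ht0 : 0 < t) (ht : t < 1 / 2) (htC : t * C ≤ 1) {v : Fin C → ℝ}
    (hv0 : 0 ≤ v) (hv : ∀ k, v k ≤ (1 - t) * ∑ i, v i) :
    v ∈ PointedCone.hull ℝ (truncVertices C t) := by
  rcases (Finset.sum_nonneg fun i _ => hv0 i : 0 ≤ ∑ i, v i).eq_or_lt with hS | hS
  · have : v = 0 := funext fun i => (Finset.sum_eq_zero_iff_of_nonneg fun i _ => hv0 i).1 hS.symm i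
      (Finset.mem_univ i)
    exact this ▸ zero_mem _
  have : Nonempty (Fin C) := by
    by_contra! hempty
    simp at hS
  -- Pairing every other coordinate with a largest one splits `v` into vectors on edges at `eₖ`;
  -- as `t * C ≤ 1`, the largest coordinate is at least `t * ∑ i, v i`.
  obtain ⟨k, hmax⟩ := Finite.exists_max v
  have hrest : ∑ i ∈ Finset.univ.erase k, v i = ∑ i, v i - v k :=
    Finset.sum_erase_eq_sub (Finset.mem_univ k)
  have htk : t * ∑ i, v i ≤ v k := by
    have havg : ∑ i, v i ≤ C * v k := by
      simpa using Finset.sum_le_card_nsmul Finset.univ v (v k) fun i _ => hmax i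
    calc t * ∑ i, v i ≤ t * (C * v k) := mul_le_mul_of_nonneg_left havg ht0.le
      _ = t * C * v k := (mul_assoc _ _ _).symm
      _ ≤ v k := mul_le_of_le_one_left (hv0 k) htC
  have htrest : t * ∑ i, v i ≤ ∑ i ∈ Finset.univ.erase k, v i := by linarith [hv k]
  have hpos : 0 < ∑ i ∈ Finset.univ.erase k, v i := (mul_pos ht0 hS).trans_le htrest
  have hsum : ∑ i ∈ Finset.univ.erase k, v i + v k = ∑ i, v i := by linarith
  rw [← inv_smul_smul₀ hpos.ne' v, sum_erase_smul_eq_sum_smul_single_add_single v k]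
  refine PointedCone.smul_mem _ (inv_nonneg.2 hpos.le) <|
    sum_mem fun j hj => PointedCone.smul_mem _ (hv0 j) ?_
  exact single_add_single_mem_hull_truncVertices ht (Finset.ne_of_mem_erase hj)
    (hsum ▸ htrest) (hsum ▸ htk)

lemma suffScattered_of_range_col_eq_truncVertices {m : ℕ} {H : Matrix (Fin C) (Fin m) ℝ}
    (hH : Set.range H.col = truncVertices C t) (ht0 : 0 < t) (htC : t * C ≤ 1)
    (hslack : 2 < (1 - t) * C) : SuffScattered H := by
  have hC : (2 : ℝ) < C := by nlinarith
  have ht : t < 1 / 2 := by nlinarith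
  have hmem : ∀ v : Fin C → ℝ, 0 ≤ v → (∀ k, v k ≤ (1 - t) * ∑ i, v i) → v ∈ coneOf H := by
    intro v hv0 hv
    rw [coneOf_eq_hull, hH]
    exact mem_hull_truncVertices ht0 ht htC hv0 hv
  have hle : ∀ v ∈ Rcone C, ∀ k, v k ≤ 2 / C * ∑ i, v i := by
    intro v hv k
    rw [div_mul_eq_mul_div, le_div_iff₀' (by linarith)]
    exact card_mul_le_two_mul_sum_of_mem_Rcone hv k
  have hgap : 2 / C < 1 - t := (div_lt_iff₀ (by linarith)).2 hslack
  refine suffScattered_of_forall_exists_add_single_mem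
    (fun v hv => hmem v (nonneg_of_mem_Rcone hv) fun k => ?_) fun v hv hne i => ?_
  · exact (hle v hv k).trans (mul_le_mul_of_nonneg_right hgap.le (mem_Rcone_iff.1 hv).1)
  · have hpos : 0 < ∑ i, v i := Fintype.sum_pos ((nonneg_of_mem_Rcone hv).lt_of_ne hne.symm)
    obtain ⟨ε, hε, hv'⟩ :=
      exists_add_single_le_mul_sum hgap (by linarith) hpos (hle v hv) i
    exact ⟨ε, hε, hmem _ (add_nonneg (nonneg_of_mem_Rcone hv) (Pi.single_nonneg.2 hε.le)) hv'⟩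

end TruncatedSimplex

/-- Proposition 1 (non-necessity): for every `C ≥ 3` there is a sufficiently scattered
matrix whose columns lie in the probability simplex and none of whose columns is a
standard basis vector. -/
theorem sufficiently_scattered_without_anchor_points
    (C : ℕ) (hC : 3 ≤ C) :
    ∃ m : ℕ, 1 ≤ m ∧ ∃ H : Matrix (Fin C) (Fin m) ℝ,
      (∀ j, (∀ i, 0 ≤ H i j) ∧ ∑ i, H i j = 1) ∧
      (∀ j : Fin m, ∀ i : Fin C, (fun k => H k j) ≠ Pi.single i 1) ∧
      SuffScattered H := by
  have hC' : (3 : ℝ) ≤ C := by exact_mod_cast hC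
  obtain ⟨t, ht0, htC, hslack⟩ : ∃ t : ℝ, 0 < t ∧ t * C ≤ 1 ∧ 2 < (1 - t) * C := by
    refine ⟨(C + 1 : ℝ)⁻¹, by positivity, ?_, ?_⟩
    · field_simp
      linarith
    · field_simp
      nlinarith
  have ht1 : t < 1 := by nlinarith
  obtain ⟨m, w, -, hw⟩ := (truncVertices_finite C t).fin_param
  have hmem : ∀ j, w j ∈ truncVertices C t := fun j => hw ▸ Set.mem_range_self j
  have hm : (Set.range w).Nonempty := hw ▸ truncVertices_nonempty (by omega)
  exact ⟨m, Fin.pos_iff_nonempty.2 (Set.range_nonempty_iff_nonempty.1 hm), (Matrix.of w)ᵀ,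
    fun j => truncVertices_subset_stdSimplex ht0.le ht1.le (hmem j),
    fun j i hji => single_one_notMem_truncVertices ht0 ht1 i (hji ▸ hmem j),
    suffScattered_of_range_col_eq_truncVertices hw ht0 htC hslack⟩
end

section
/- Let A be a real C×C matrix such that every column satisfies ‖A_{:,i}‖₂ ≤ ∑_{j=1}^C A_{ji}, the total sum of all entries of A equals C (𝟙ᵀA𝟙 = C), and |det A| = 1. Then A is an orthogonal matrix (AᵀA = I) and each column of A sums to 1 (𝟙ᵀA = 𝟙ᵀ). -/
open Matrix BigOperators

/-! Let `s i` be the column sums. Hadamard's inequality and AM–GM give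
`1 = |det A| ≤ ∏ i, ‖A_{:,i}‖ ≤ ∏ i, s i ≤ 1`, and the equality case of AM–GM forces `s i = 1`.
The columns then have norm at most `1`, so the eigenvalues of `Aᵀ * A` have sum at most `C` and
product `1`; the same equality case makes them all `1`, whence `Aᵀ * A = 1`. AM–GM enters through
`z ≤ exp (z - 1)`, which is strict for `z ≠ 1`. -/

open scoped ComplexOrder

section ArithmeticGeometricMean

variable {ι : Type*} {s : Finset ι} {z : ι → ℝ}

theorem prod_exp_sub_one_le_one (hs : ∑ i ∈ s, z i ≤ s.card) :
    ∏ i ∈ s, Real.exp (z i - 1) ≤ 1 := by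
  rw [← Real.exp_sum, Real.exp_le_one_iff, Finset.sum_sub_distrib]
  simpa using hs

theorem prod_le_one_of_sum_le_card (hz : ∀ i ∈ s, 0 ≤ z i) (hs : ∑ i ∈ s, z i ≤ s.card) :
    ∏ i ∈ s, z i ≤ 1 :=
  calc
    ∏ i ∈ s, z i ≤ ∏ i ∈ s, Real.exp (z i - 1) :=
      Finset.prod_le_prod hz fun i _ ↦ by simpa using Real.add_one_le_exp (z i - 1)
    _ ≤ 1 := prod_exp_sub_one_le_one hs

theorem eq_one_of_sum_le_card_of_one_le_prod (hz : ∀ i ∈ s, 0 ≤ z i)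
    (hs : ∑ i ∈ s, z i ≤ s.card) (hprod : 1 ≤ ∏ i ∈ s, z i) : ∀ i ∈ s, z i = 1 := by
  have hpos : ∀ i ∈ s, 0 < z i := fun i hi ↦
    (hz i hi).lt_of_ne' (Finset.prod_ne_zero_iff.mp (zero_lt_one.trans_le hprod).ne' i hi)
  by_contra! ⟨i, hi, hne⟩
  refine hprod.not_gt ?_
  calc
    ∏ j ∈ s, z j < ∏ j ∈ s, Real.exp (z j - 1) :=
      Finset.prod_lt_prod hpos (fun j _ ↦ by simpa using Real.add_one_le_exp (z j - 1))
        ⟨i, hi, by simpa using Real.add_one_lt_exp (sub_ne_zero.mpr hne)⟩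
    _ ≤ 1 := prod_exp_sub_one_le_one hs

end ArithmeticGeometricMean

section PosSemidef

variable {𝕜 n : Type*} [RCLike 𝕜] [Fintype n] [DecidableEq n] {G : Matrix n n 𝕜}

theorem sum_eigenvalues_le_card_of_trace_le_card (hG : G.IsHermitian)
    (htrace : G.trace ≤ Fintype.card n) : ∑ i, hG.eigenvalues i ≤ Fintype.card n := by
  rw [hG.trace_eq_sum_eigenvalues] at htrace
  exact_mod_cast htrace

theorem det_le_one_of_posSemidef_of_trace_le_card (hG : G.PosSemidef)
    (htrace : G.trace ≤ Fintype.card n) : G.det ≤ 1 := by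
  rw [hG.isHermitian.det_eq_prod_eigenvalues]
  exact_mod_cast prod_le_one_of_sum_le_card (fun i _ ↦ hG.eigenvalues_nonneg i)
    (sum_eigenvalues_le_card_of_trace_le_card hG.isHermitian htrace)

theorem eq_one_of_posSemidef_of_trace_le_card_of_one_le_det (hG : G.PosSemidef)
    (htrace : G.trace ≤ Fintype.card n) (hdet : 1 ≤ G.det) : G = 1 := by
  have hprod : 1 ≤ ∏ i, hG.isHermitian.eigenvalues i := by
    rw [hG.isHermitian.det_eq_prod_eigenvalues] at hdet
    exact_mod_cast hdet
  have heig : hG.isHermitian.eigenvalues = 1 := funext fun i ↦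
    eq_one_of_sum_le_card_of_one_le_prod (fun i _ ↦ hG.eigenvalues_nonneg i)
      (sum_eigenvalues_le_card_of_trace_le_card hG.isHermitian htrace) hprod i (Finset.mem_univ i)
  rw [hG.isHermitian.spectral_theorem, heig]
  simp [Function.comp_def]

end PosSemidef

section Gram

variable {𝕜 E n : Type*} [RCLike 𝕜] [SeminormedAddCommGroup E] [InnerProductSpace 𝕜 E]
  [Fintype n]

theorem trace_gram_le_card {v : n → E} (hv : ∀ i, ‖v i‖ ≤ 1) :
    (gram 𝕜 v).trace ≤ Fintype.card n := by
  have hsum : ∑ i, ‖v i‖ ^ 2 ≤ Fintype.card n := by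
    simpa using Finset.sum_le_card_nsmul Finset.univ _ 1
      fun i _ ↦ pow_le_one₀ (norm_nonneg (v i)) (hv i)
  simp only [trace, diag_apply, gram_apply, inner_self_eq_norm_sq_to_K]
  exact_mod_cast hsum

variable [DecidableEq n]

theorem gram_smul (c : n → 𝕜) (v : n → E) :
    gram 𝕜 (fun i ↦ c i • v i) = (diagonal c)ᴴ * gram 𝕜 v * diagonal c := by
  ext i j
  simp [diagonal_conjTranspose, inner_smul_left, inner_smul_right, mul_comm]

theorem det_gram_smul (c : n → 𝕜) (v : n → E) :
    (gram 𝕜 fun i ↦ c i • v i).det = (∏ i, (‖c i‖ : 𝕜) ^ 2) * (gram 𝕜 v).det := by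
  simp only [gram_smul, det_mul, det_conjTranspose, det_diagonal, ← RCLike.conj_mul,
    Finset.prod_mul_distrib, starRingEnd_apply, star_prod]
  ring

theorem det_gram_le_one {v : n → E} (hv : ∀ i, ‖v i‖ ≤ 1) : (gram 𝕜 v).det ≤ 1 :=
  det_le_one_of_posSemidef_of_trace_le_card (posSemidef_gram 𝕜 v) (trace_gram_le_card hv)

theorem gram_eq_one_of_norm_le_one {v : n → E} (hv : ∀ i, ‖v i‖ ≤ 1)
    (hdet : 1 ≤ (gram 𝕜 v).det) : gram 𝕜 v = 1 :=
  eq_one_of_posSemidef_of_trace_le_card_of_one_le_det (posSemidef_gram 𝕜 v)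
    (trace_gram_le_card hv) hdet

theorem det_gram_eq_zero_of_norm_eq_zero {v : n → E} {i : n} (hi : ‖v i‖ = 0) :
    (gram 𝕜 v).det = 0 :=
  det_eq_zero_of_row_eq_zero i fun j ↦
    norm_le_zero_iff.mp (by simpa [hi] using norm_inner_le_norm (𝕜 := 𝕜) (v i) (v j))

/-- Hadamard's inequality, obtained by normalizing the vectors: AM–GM for the eigenvalues bounds the
Gram determinant of unit vectors by `1`. -/
theorem det_gram_le_prod_norm_sq (v : n → E) : (gram 𝕜 v).det ≤ ∏ i, (‖v i‖ : 𝕜) ^ 2 := by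
  by_cases hv : ∃ i, ‖v i‖ = 0
  · obtain ⟨i, hi⟩ := hv
    rw [det_gram_eq_zero_of_norm_eq_zero hi]
    exact_mod_cast Finset.prod_nonneg fun i _ ↦ sq_nonneg ‖v i‖
  push Not at hv
  set u : n → E := fun i ↦ (‖v i‖⁻¹ : 𝕜) • v i with hu
  have hnorm : ∀ i, ‖u i‖ ≤ 1 := fun i ↦ by simp [hu, norm_smul, hv i]
  have hvu : v = fun i ↦ (‖v i‖ : 𝕜) • u i := funext fun i ↦ by simp [hu, smul_smul, hv i]
  calc
    (gram 𝕜 v).det = (∏ i, (‖v i‖ : 𝕜) ^ 2) * (gram 𝕜 u).det := by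
      conv_lhs => rw [hvu, det_gram_smul]
      simp
    _ ≤ (∏ i, (‖v i‖ : 𝕜) ^ 2) * 1 :=
      mul_le_mul_of_nonneg_left (det_gram_le_one hnorm)
        (by exact_mod_cast Finset.prod_nonneg fun i _ ↦ sq_nonneg ‖v i‖)
    _ = ∏ i, (‖v i‖ : 𝕜) ^ 2 := mul_one _

end Gram

section Columns

variable {𝕜 m n : Type*} [RCLike 𝕜]

theorem gram_toLp_col [Fintype m] (A : Matrix m n 𝕜) :
    gram 𝕜 (fun i ↦ WithLp.toLp 2 (A.col i)) = Aᴴ * A := by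
  ext i j
  simp [mul_apply, PiLp.inner_apply, mul_comm]

variable [Fintype n] [DecidableEq n]

theorem det_gram_toLp_col (A : Matrix n n 𝕜) :
    (gram 𝕜 fun i ↦ WithLp.toLp 2 (A.col i)).det = (‖A.det‖ : 𝕜) ^ 2 := by
  rw [gram_toLp_col, det_mul, det_conjTranspose, ← RCLike.conj_mul, starRingEnd_apply]

theorem norm_det_le_prod_norm_col (A : Matrix n n 𝕜) :
    ‖A.det‖ ≤ ∏ i, ‖WithLp.toLp 2 (A.col i)‖ := by
  have hsq : (‖A.det‖ : 𝕜) ^ 2 ≤ ∏ i, (‖WithLp.toLp 2 (A.col i)‖ : 𝕜) ^ 2 :=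
    (det_gram_toLp_col A).ge.trans (det_gram_le_prod_norm_sq _)
  rw [Finset.prod_pow] at hsq
  exact le_of_sq_le_sq (by exact_mod_cast hsq) (Finset.prod_nonneg fun i _ ↦ norm_nonneg _)

theorem det_bound_equality_case_general (A : Matrix n n 𝕜) {s : n → ℝ}
    (hcol : ∀ i, ‖WithLp.toLp 2 (A.col i)‖ ≤ s i) (hsum : ∑ i, s i ≤ Fintype.card n)
    (hdet : 1 ≤ ‖A.det‖) : Aᴴ * A = 1 ∧ ∀ i, s i = 1 := by
  have hprod : 1 ≤ ∏ i, s i :=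
    calc
      1 ≤ ‖A.det‖ := hdet
      _ ≤ ∏ i, ‖WithLp.toLp 2 (A.col i)‖ := norm_det_le_prod_norm_col A
      _ ≤ ∏ i, s i := Finset.prod_le_prod (fun i _ ↦ norm_nonneg _) fun i _ ↦ hcol i
  have hs : ∀ i, s i = 1 := fun i ↦
    eq_one_of_sum_le_card_of_one_le_prod (fun i _ ↦ (norm_nonneg _).trans (hcol i)) hsum hprod i
      (Finset.mem_univ i)
  have hgram : 1 ≤ (gram 𝕜 fun i ↦ WithLp.toLp 2 (A.col i)).det := by
    rw [det_gram_toLp_col]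
    exact_mod_cast one_le_pow₀ hdet
  rw [← gram_toLp_col]
  exact ⟨gram_eq_one_of_norm_le_one (fun i ↦ (hcol i).trans (hs i).le) hgram, hs⟩

end Columns

theorem euclNorm_eq_norm_toLp {C : ℕ} (v : Fin C → ℝ) : euclNorm v = ‖WithLp.toLp 2 v‖ := by
  simp [euclNorm, EuclideanSpace.norm_eq]

/-- Equality case of the determinant bound: `A` is orthogonal and each column sums to 1. -/
theorem det_bound_equality_case
    {C : ℕ} (A : Matrix (Fin C) (Fin C) ℝ)
    (hcol : ∀ i : Fin C, euclNorm (fun j => A j i) ≤ ∑ j, A j i)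
    (htotal : ∑ i, ∑ j, A i j = (C : ℝ))
    (hdet : |A.det| = 1) :
    Aᵀ * A = 1 ∧ ∀ i : Fin C, ∑ j, A j i = 1 := by
  simpa [conjTranspose_eq_transpose_of_trivial] using det_bound_equality_case_general A
    (fun i ↦ (euclNorm_eq_norm_toLp _).ge.trans (hcol i))
    (by rw [Finset.sum_comm, htotal, Fintype.card_fin]) hdet.ge
end

section
/- Let C ≥ 2 and let H be a real C×m matrix satisfying condition (2) of the sufficiently scattered assumption: for every real orthogonal C×C matrix Q that is not a permutation matrix, cone(H) is not a subset of cone(Q). Let B be an invertible real C×C matrix whose columns are pairwise orthogonal, and suppose cone(H) ⊆ cone(B). Then there exists a permutation σ of {1, …, C} such that for every i, the i-th column of B equals ‖B_{:,i}‖₂ · e_{σ(i)}, i.e. each column of B is a positive scalar multiple of a distinct standard basis vector. -/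
open Matrix BigOperators

theorem euclNorm_mul_self {n : ℕ} (v : Fin n → ℝ) : euclNorm v * euclNorm v = v ⬝ᵥ v := by
  simp only [euclNorm, dotProduct, ← sq]
  exact Real.sq_sqrt (Finset.sum_nonneg fun i _ => sq_nonneg (v i))

theorem euclNorm_eq_zero {n : ℕ} {v : Fin n → ℝ} : euclNorm v = 0 ↔ v = 0 := by
  rw [← mul_self_eq_zero, euclNorm_mul_self, dotProduct_self_eq_zero]

theorem coneOf_mul_subset {n m p : ℕ} (M : Matrix (Fin n) (Fin m) ℝ)
    {N : Matrix (Fin m) (Fin p) ℝ} (hN : ∀ i j, 0 ≤ N i j) : coneOf (M * N) ⊆ coneOf M := by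
  rintro _ ⟨α, hα, rfl⟩
  exact ⟨N *ᵥ α, fun i => dotProduct_nonneg_of_nonneg (hN i) hα, (mulVec_mulVec α M N).symm⟩

theorem isPermMatrix_iff_col_eq_single {n : ℕ} {Q : Matrix (Fin n) (Fin n) ℝ} :
    IsPermMatrix Q ↔ ∃ σ : Equiv.Perm (Fin n), ∀ j, Q.col j = Pi.single (σ j) 1 := by
  simp only [IsPermMatrix, funext_iff, col_apply, Pi.single_apply]
  exact exists_congr fun σ => forall_comm

/-- The matrix obtained from `M` by dividing each column by its Euclidean norm; a zero column
stays zero, as `0⁻¹ = 0`. It turns a matrix with orthogonal columns into an orthogonal one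
without shrinking its cone, so that condition (2) applies to it. -/
noncomputable def normalizeCols {n m : ℕ} (M : Matrix (Fin n) (Fin m) ℝ) :
    Matrix (Fin n) (Fin m) ℝ :=
  Matrix.of fun i j => (euclNorm (M.col j))⁻¹ * M i j

section normalizeCols

variable {n m : ℕ} (M : Matrix (Fin n) (Fin m) ℝ)

theorem col_normalizeCols (j : Fin m) :
    (normalizeCols M).col j = (euclNorm (M.col j))⁻¹ • M.col j :=
  rfl

theorem euclNorm_smul_col_normalizeCols (j : Fin m) :
    euclNorm (M.col j) • (normalizeCols M).col j = M.col j := by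
  rw [col_normalizeCols]
  obtain hzero | hne := eq_or_ne (M.col j) 0
  · rw [hzero, smul_zero, smul_zero]
  · exact smul_inv_smul₀ (euclNorm_eq_zero.not.mpr hne) _

theorem normalizeCols_mul_diagonal :
    normalizeCols M * diagonal (fun j => euclNorm (M.col j)) = M := by
  ext i j
  rw [mul_diagonal, mul_comm]
  exact congrFun (euclNorm_smul_col_normalizeCols M j) i

theorem coneOf_subset_coneOf_normalizeCols : coneOf M ⊆ coneOf (normalizeCols M) := by
  have hnonneg (i j : Fin m) : 0 ≤ diagonal (fun j => euclNorm (M.col j)) i j := by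
    rw [diagonal_apply]
    split_ifs
    exacts [Real.sqrt_nonneg _, le_rfl]
  calc coneOf M = coneOf (normalizeCols M * diagonal fun j => euclNorm (M.col j)) := by
        rw [normalizeCols_mul_diagonal]
    _ ⊆ coneOf (normalizeCols M) := coneOf_mul_subset _ hnonneg

variable {M}

theorem transpose_normalizeCols_mul_self (horth : M.HasOrthogonalCols)
    (hne : ∀ j, M.col j ≠ 0) : (normalizeCols M)ᵀ * normalizeCols M = 1 := by
  ext i j
  change (normalizeCols M).col i ⬝ᵥ (normalizeCols M).col j = _
  simp only [col_normalizeCols, smul_dotProduct, dotProduct_smul, smul_eq_mul]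
  obtain rfl | hij := eq_or_ne i j
  · have hnorm : euclNorm (M.col i) ≠ 0 := euclNorm_eq_zero.not.mpr (hne i)
    rw [← euclNorm_mul_self, inv_mul_cancel_left₀ hnorm, inv_mul_cancel₀ hnorm, one_apply_eq]
  · have hdot : M.col i ⬝ᵥ M.col j = 0 := horth hij
    rw [hdot, mul_zero, mul_zero, one_apply_ne hij]

end normalizeCols

/-- If `H` satisfies condition (2) of the sufficiently scattered assumption and `B` is an
invertible matrix with pairwise orthogonal columns whose cone contains `cone(H)`, then
each column of `B` is a positive scalar multiple of a distinct standard basis vector. -/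
theorem column_orthogonal_enclosing_is_scaled_perm
    {C m : ℕ} (hC : 2 ≤ C) (H : Matrix (Fin C) (Fin m) ℝ)
    (hcond2 : ∀ Q : Matrix (Fin C) (Fin C) ℝ, Qᵀ * Q = 1 → ¬ IsPermMatrix Q →
      ¬ (coneOf H ⊆ coneOf Q))
    (B : Matrix (Fin C) (Fin C) ℝ)
    (hBinv : IsUnit B.det)
    (hBorth : ∀ i j : Fin C, i ≠ j → ∑ k, B k i * B k j = 0)
    (hsub : coneOf H ⊆ coneOf B) :
    ∃ σ : Equiv.Perm (Fin C), ∀ i : Fin C,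
      (fun k => B k i) = euclNorm (fun k => B k i) • (Pi.single (σ i) 1 : Fin C → ℝ) := by
  have hne (j : Fin C) : B.col j ≠ 0 := fun hzero =>
    hBinv.ne_zero (det_eq_zero_of_column_eq_zero j (congrFun hzero))
  have horthogonal : (normalizeCols B)ᵀ * normalizeCols B = 1 :=
    transpose_normalizeCols_mul_self hBorth hne
  have hperm : IsPermMatrix (normalizeCols B) := by
    by_contra hnot
    exact hcond2 _ horthogonal hnot (hsub.trans (coneOf_subset_coneOf_normalizeCols B))
  obtain ⟨σ, hσ⟩ := isPermMatrix_iff_col_eq_single.mp hperm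
  refine ⟨σ, fun i => ?_⟩
  rw [← hσ i]
  exact (euclNorm_smul_col_normalizeCols B i).symm
end
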